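/- Let V be a representation of the Yangian Y(gl_n) with T_{ij}^{(r)} = 0 for all r ≥ 3, and let ζ ∈ V satisfy T_{ij}(u)ζ = 0 for all 1 ≤ i < j ≤ n and T_{ii}(u)ζ = (u+λ_i)(u+μ_i)ζ for i = 1,…,n, for some complex numbers λ_1,…,λ_n, μ_1,…,μ_n; set l_j = λ_j − j + 1 and m_j = μ_j − j + 1, and write E_{in} := T_{in}^{(1)}. Then for every integer k ≥ 1, every complex v, and every 1 ≤ a ≤ n−1: (i) E_{in}·𝒯_{na}(v,k)ζ = 0 for i < a; (ii) for a < i ≤ n−1, E_{in}·𝒯_{na}(v,k)ζ = (−1)^{n−i} k · Π_{j=i+1}^n (v'+l_j)(v'+m_j) · τ_{ia}(v+k−1)·𝒯_{na}(v,k−1)ζ, where v' = v+a+k−1; and (iii) E_{an}·𝒯_{na}(v,k)ζ = (−1)^{n−a−1} k · ( 𝒯_{na}(v+1,k−1)·T^{a⋯n−1}_{a⋯n−1}(v) − 𝒯_{na}(v,k−1)·T^{a+1⋯n}_{a+1⋯n}(v+k−1) ) ζ. -/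

import Mathlib

/-- A representation of the Yangian `Y(gl_n)` on a complex vector space `V`:
a family of operators `T r i j` (`r ≥ 1`), with `T 0 i j = δ_{ij}·id`,
satisfying the defining relations
`[T^{(r+1)}_{ij}, T^{(s)}_{kl}] − [T^{(r)}_{ij}, T^{(s+1)}_{kl}]
  = T^{(r)}_{kj} T^{(s)}_{il} − T^{(s)}_{kj} T^{(r)}_{il}`. -/
def IsYangianRep (n : ℕ) {V : Type*} [AddCommGroup V] [Module ℂ V]
    (T : ℕ → Fin n → Fin n → (V →ₗ[ℂ] V)) : Prop :=
  (∀ i j : Fin n, T 0 i j = if i = j then LinearMap.id else 0) ∧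
  (∀ r s : ℕ, ∀ i j k l : Fin n,
    (T (r + 1) i j ∘ₗ T s k l - T s k l ∘ₗ T (r + 1) i j)
      - (T r i j ∘ₗ T (s + 1) k l - T (s + 1) k l ∘ₗ T r i j)
    = T r k j ∘ₗ T s i l - T s k j ∘ₗ T r i l)

/-- The polynomial operator `T_{ij}(u) = u² δ_{ij}·id + u T^{(1)}_{ij} + T^{(2)}_{ij}`
(in a representation with `T^{(r)} = 0` for `r ≥ 3`). -/
noncomputable def Tpoly {n : ℕ} {V : Type*} [AddCommGroup V] [Module ℂ V]
    (T : ℕ → Fin n → Fin n → (V →ₗ[ℂ] V)) (i j : Fin n) (u : ℂ) : V →ₗ[ℂ] V :=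
  u ^ 2 • (if i = j then (LinearMap.id : V →ₗ[ℂ] V) else 0) + u • T 1 i j + T 2 i j

/-- The polynomial quantum minor `T^{a_1⋯a_l}_{b_1⋯b_l}(u)
= Σ_{σ ∈ S_l} sgn σ · T_{a_{σ(1)} b_1}(u) T_{a_{σ(2)} b_2}(u−1) ⋯
T_{a_{σ(l)} b_l}(u−l+1)`. -/
noncomputable def TqminorPoly {n : ℕ} {V : Type*} [AddCommGroup V] [Module ℂ V]
    (T : ℕ → Fin n → Fin n → (V →ₗ[ℂ] V)) (l : ℕ) (a b : Fin l → Fin n)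
    (u : ℂ) : V →ₗ[ℂ] V :=
  ∑ σ : Equiv.Perm (Fin l),
    (((Equiv.Perm.sign σ : ℤ) : ℂ)) •
      (List.ofFn fun s : Fin l =>
        Tpoly T (a (σ s)) (b s) (u - ((s : ℕ) : ℂ))).foldr (· ∘ₗ ·) LinearMap.id

/-- The sequence of `0`-indexed row (or column) indices `off, off+1, …, off+l-1`. -/
def idxSeq (n off l : ℕ) (h : off + l ≤ n) : Fin l → Fin n :=
  fun s => ⟨off + s.1, by have := s.isLt; omega⟩

/-- The sequence of `0`-indexed indices `off, off+1, …, off+l-2, n-1`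
(the last index replaced by `n-1`). -/
def idxSeqLast (n off l : ℕ) (h : off + l ≤ n) (hn : 1 ≤ n) : Fin l → Fin n :=
  fun s => if s.1 = l - 1 then ⟨n - 1, by omega⟩
    else ⟨off + s.1, by have := s.isLt; omega⟩

/-- The lowering operator `τ_{ra}(v) = T^{a+1⋯r}_{a⋯r−1}(v)`
(`1 ≤ a < r ≤ n`, indices in `1, …, n` as in the paper). -/
noncomputable def tauPoly {n : ℕ} {V : Type*} [AddCommGroup V] [Module ℂ V]
    (T : ℕ → Fin n → Fin n → (V →ₗ[ℂ] V)) (r a : ℕ)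
    (ha : 1 ≤ a) (har : a < r) (hr : r ≤ n) (v : ℂ) : V →ₗ[ℂ] V :=
  TqminorPoly T (r - a) (idxSeq n a (r - a) (by omega))
    (idxSeq n (a - 1) (r - a) (by omega)) v

/-- The product of lowering operators
`𝒯_{ra}(v, k) = τ_{ra}(v+k−1) ⋯ τ_{ra}(v+1) τ_{ra}(v)`
(the identity operator when `k = 0`). -/
noncomputable def TTPoly {n : ℕ} {V : Type*} [AddCommGroup V] [Module ℂ V]
    (T : ℕ → Fin n → Fin n → (V →ₗ[ℂ] V)) (r a : ℕ)
    (ha : 1 ≤ a) (har : a < r) (hr : r ≤ n) (v : ℂ) : ℕ → (V →ₗ[ℂ] V)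
  | 0 => LinearMap.id
  | k + 1 => tauPoly T r a ha har hr (v + (k : ℂ)) ∘ₗ TTPoly T r a ha har hr v k

/-!
A product of column forms `∑ a, x_a ⊗ T_{al}(u)` in anticommuting variables `x_a` is a generating
function of quantum minors, so the commutation relations of the Yangian give the commutator of
`T_{kl}(u)` with a quantum minor, and the coefficient of `u²` in it gives the commutator with
`E_{kl}`. Commuting `E_{in}` past a lowering operator `τ(v)` thus replaces either a row or a column
of the minor. Both modified minors satisfy an exchange relation with `τ`, which moves them to the
right end of `𝒯(v, k)`; there the contributions of the `k` factors collapse to `k` times a single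
one. On `ζ` that minor vanishes if one of its rows lies above all its columns, and it is otherwise
reduced by expanding along its last columns as long as these agree with the last rows.
-/

namespace Yangian

open TensorProduct

section WeaklyPolynomial

variable {K M N : Type*} [Field K] [AddCommGroup M] [Module K M] [AddCommGroup N] [Module K N]

/-- A vector-valued function on `K` is weakly polynomial if each linear functional turns it into a
polynomial function. Only closure under linear maps and the vanishing criterion `eq_zero` are
needed, which is why no degree bound and no topology enter. -/
def IsWeaklyPolynomial (f : K → M) : Prop :=
  ∀ φ : Module.Dual K M, ∃ p : Polynomial K, ∀ u, φ (f u) = p.eval u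

namespace IsWeaklyPolynomial

variable {f g : K → M}

theorem map (hf : IsWeaklyPolynomial f) (L : M →ₗ[K] N) :
    IsWeaklyPolynomial fun u => L (f u) :=
  fun φ => hf (φ ∘ₗ L)

theorem sub (hf : IsWeaklyPolynomial f) (hg : IsWeaklyPolynomial g) :
    IsWeaklyPolynomial fun u => f u - g u := by
  intro φ
  obtain ⟨p, hp⟩ := hf φ
  obtain ⟨q, hq⟩ := hg φ
  exact ⟨p - q, fun u => by rw [map_sub, hp, hq, Polynomial.eval_sub]⟩

theorem sum {α : Type*} (s : Finset α) {f : α → K → M} (hf : ∀ i ∈ s, IsWeaklyPolynomial (f i)) :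
    IsWeaklyPolynomial fun u => ∑ i ∈ s, f i u := by
  intro φ
  choose! p hp using fun i hi => hf i hi φ
  refine ⟨∑ i ∈ s, p i, fun u => ?_⟩
  rw [map_sum, Polynomial.eval_finsetSum]
  exact Finset.sum_congr rfl fun i hi => hp i hi u

theorem sub_smul (hf : IsWeaklyPolynomial f) (c : K) :
    IsWeaklyPolynomial fun u => (u - c) • f u := by
  intro φ
  obtain ⟨p, hp⟩ := hf φ
  exact ⟨(Polynomial.X - Polynomial.C c) * p, fun u => by simp [hp]⟩

theorem eq_zero [CharZero K] (hf : IsWeaklyPolynomial f) (c : K)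
    (h : ∀ m : ℕ, f (c + m) = 0) (u : K) : f u = 0 := by
  refine (Module.forall_dual_apply_eq_zero_iff K _).mp fun φ => ?_
  obtain ⟨p, hp⟩ := hf φ
  have hroots : {x | p.IsRoot x}.Infinite :=
    Set.infinite_of_injective_forall_mem (f := fun m : ℕ => c + m)
      (fun m m' hm => Nat.cast_injective (add_left_cancel hm))
      fun m => by simp [Polynomial.IsRoot, ← hp, h]
  rw [hp, Polynomial.eq_zero_of_infinite_isRoot p hroots, Polynomial.eval_zero]

end IsWeaklyPolynomial

end WeaklyPolynomial

section RTT

variable {K A ι : Type*} [Field K] [Ring A] [Algebra K A]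

/-- The commutation relations `(u - v) [t_ij(u), t_kl(v)] = t_kj(u) t_il(v) - t_kj(v) t_il(u)` of
the Yangian (equivalently, the RTT relation), for a matrix `t` of polynomial functions with values
in an associative algebra. -/
structure IsRTT (t : ι → ι → K → A) : Prop where
  rtt : ∀ i j k l u v, (u - v) • (t i j u * t k l v - t k l v * t i j u) =
    t k j u * t i l v - t k j v * t i l u
  polynomial : ∀ i j, IsWeaklyPolynomial (t i j)

end RTT

section Grassmann

variable {K A ι : Type*} [Field K] [Ring A] [Algebra K A]

variable (K A ι) in
/-- The exterior algebra on generators indexed by `ι`, with coefficients extended to the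
noncommutative algebra `A`, whose elements commute with the generators. The quantum minors are
the coefficients of products of its degree-one elements `columnForm`. -/
abbrev Grassmann := ExteriorAlgebra K (ι → K) ⊗[K] A

namespace Grassmann

variable (K ι) in
/-- The inclusion of the coefficient algebra into the Grassmann algebra. -/
def coeff : A →ₐ[K] Grassmann K A ι := Algebra.TensorProduct.includeRight

/-- The projection of the Grassmann algebra onto its component of degree zero. -/
def constantPart : Grassmann K A ι →ₐ[K] A :=
  (Algebra.TensorProduct.lid K A).toAlgHom.comp
    (Algebra.TensorProduct.map ExteriorAlgebra.algebraMapInv (AlgHom.id K A))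

/-- Contraction of the Grassmann algebra with the coordinate functional of index `k`, the odd
derivation dual to `gen k`. -/
def contract (k : ι) : Grassmann K A ι →ₗ[K] Grassmann K A ι :=
  (CliffordAlgebra.contractLeft (Q := 0) (LinearMap.proj (R := K) (φ := fun _ => K) k)).rTensor A

theorem constantPart_coeff (x : A) : constantPart (coeff K ι x) = x := by
  simp [constantPart, coeff]

theorem contract_one (k : ι) : contract k (1 : Grassmann K A ι) = 0 := by
  rw [contract, Algebra.TensorProduct.one_def, LinearMap.rTensor_tmul,
    CliffordAlgebra.contractLeft_one, TensorProduct.zero_tmul]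

theorem contract_coeff_mul (k : ι) (x : A) (y : Grassmann K A ι) :
    contract k (coeff K ι x * y) = coeff K ι x * contract k y := by
  induction y using TensorProduct.induction_on with
  | zero => simp
  | add y z hy hz => simp [mul_add, hy, hz]
  | tmul w z => simp [contract, coeff]

theorem contract_mul_coeff (k : ι) (y : Grassmann K A ι) (x : A) :
    contract k (y * coeff K ι x) = contract k y * coeff K ι x := by
  induction y using TensorProduct.induction_on with
  | zero => simp
  | add y z hy hz => simp [add_mul, hy, hz]
  | tmul w z => simp [contract, coeff]

variable [DecidableEq ι]

variable (K A) in
/-- The generator of the Grassmann algebra with index `a`. -/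
def gen (a : ι) : Grassmann K A ι := ExteriorAlgebra.ι K (Pi.single a 1) ⊗ₜ 1

theorem gen_mul_gen (a b : ι) : gen K A a * gen K A b = -(gen K A b * gen K A a) := by
  rw [eq_neg_iff_add_eq_zero]
  simp [gen, ← TensorProduct.add_tmul, ExteriorAlgebra.ι_add_mul_swap]

theorem coeff_mul_gen (x : A) (a : ι) : coeff K ι x * gen K A a = gen K A a * coeff K ι x := by
  simp [coeff, gen]

theorem constantPart_gen (a : ι) : constantPart (gen K A a) = 0 := by
  simp [constantPart, gen, ExteriorAlgebra.algebraMapInv]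

theorem contract_gen_mul (k a : ι) (y : Grassmann K A ι) :
    contract k (gen K A a * y) = (if k = a then y else 0) - gen K A a * contract k y := by
  induction y using TensorProduct.induction_on with
  | zero => simp
  | add y z hy hz =>
    rw [mul_add, map_add, hy, hz, map_add, mul_add]
    split_ifs <;> abel
  | tmul w z =>
    have hw : CliffordAlgebra.contractLeft (Q := 0) (LinearMap.proj k)
        (ExteriorAlgebra.ι K (Pi.single a 1) * w) =
          (Pi.single a 1 : ι → K) k • w - ExteriorAlgebra.ι K (Pi.single a 1) *
            CliffordAlgebra.contractLeft (Q := 0) (LinearMap.proj k) w :=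
      CliffordAlgebra.contractLeft_ι_mul _ _ _
    simp only [contract, gen, Algebra.TensorProduct.tmul_mul_tmul, one_mul,
      LinearMap.rTensor_tmul, hw, TensorProduct.sub_tmul, Pi.single_apply]
    split_ifs <;> simp

variable [Fintype ι] (t : ι → ι → K → A)

/-- The element `∑ a, gen a * t_{al}(u)` of degree one attached to the column `l` of `t(u)`. -/
def columnForm (l : ι) (u : K) : Grassmann K A ι :=
  ∑ a, gen K A a * coeff K ι (t a l u)

/-- The product of the forms of the columns `b 0, b 1, …` at `u, u - 1, …`, whose coefficients are
the quantum minors with columns `b`. -/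
def columnProd : (r : ℕ) → (Fin r → ι) → K → Grassmann K A ι
  | 0, _, _ => 1
  | r + 1, b, u => columnForm t (b 0) u * columnProd r (Fin.tail b) (u - 1)

variable {t}

theorem contract_columnForm_mul (k l : ι) (u : K) (y : Grassmann K A ι) :
    contract k (columnForm t l u * y) =
      coeff K ι (t k l u) * y - columnForm t l u * contract k y := by
  simp [columnForm, Finset.sum_mul, mul_assoc, contract_gen_mul, contract_coeff_mul,
    Finset.sum_sub_distrib]

theorem columnForm_mul_gen (l : ι) (u : K) (a : ι) :
    columnForm t l u * gen K A a = -(gen K A a * columnForm t l u) := by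
  simp only [columnForm, Finset.sum_mul, Finset.mul_sum, ← Finset.sum_neg_distrib]
  refine Finset.sum_congr rfl fun i _ => ?_
  rw [mul_assoc, coeff_mul_gen, ← mul_assoc, gen_mul_gen, neg_mul, mul_assoc]

theorem columnProd_mul_gen (r : ℕ) (b : Fin r → ι) (u : K) (a : ι) :
    columnProd t r b u * gen K A a = (-1 : K) ^ r • (gen K A a * columnProd t r b u) := by
  induction r generalizing u with
  | zero => simp [columnProd]
  | succ r ih =>
    rw [columnProd, mul_assoc, ih, mul_smul_comm, ← mul_assoc, columnForm_mul_gen, pow_succ]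
    simp [mul_assoc]

theorem columnProd_snoc (r : ℕ) (b : Fin (r + 1) → ι) (u : K) :
    columnProd t (r + 1) b u =
      columnProd t r (Fin.init b) u * columnForm t (b (Fin.last r)) (u - r) := by
  induction r generalizing u with
  | zero => simp [columnProd]
  | succ r ih =>
    rw [columnProd, ih, columnProd, mul_assoc, Nat.cast_succ, sub_sub u 1, add_comm 1 (r : K)]
    rfl

theorem columnForm_mul_columnForm_eq_sum (l b : ι) (u v : K) :
    columnForm t l u * columnForm t b v =
      ∑ i, ∑ j, gen K A i * gen K A j * coeff K ι (t i l u * t j b v) := by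
  simp only [columnForm, Finset.sum_mul_sum, map_mul]
  refine Finset.sum_congr rfl fun i _ => Finset.sum_congr rfl fun j _ => ?_
  rw [mul_assoc, ← mul_assoc (coeff K ι _), coeff_mul_gen]
  simp only [mul_assoc]

theorem columnForm_mul_columnForm_eq_neg_sum (l b : ι) (u v : K) :
    columnForm t l u * columnForm t b v =
      -∑ i, ∑ j, gen K A i * gen K A j * coeff K ι (t j l u * t i b v) := by
  rw [columnForm_mul_columnForm_eq_sum, Finset.sum_comm]
  simp only [← Finset.sum_neg_distrib]
  exact Finset.sum_congr rfl fun i _ => Finset.sum_congr rfl fun j _ => by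
    rw [gen_mul_gen j i, neg_mul]

/-- The sum over the columns `b i` of the form products in which `b i` is replaced by `l`, its
entry in the row `k` being kept as a coefficient on the right. -/
def columnReplaceSum (t : ι → ι → K → A) (k l : ι) (r : ℕ) (b : Fin r → ι) (v u : K) :
    Grassmann K A ι :=
  ∑ i, columnProd t r (Function.update b i l) v * coeff K ι (t k (b i) u)

theorem columnReplaceSum_succ (k l : ι) (r : ℕ) (b : Fin (r + 1) → ι) (v u : K) :
    columnReplaceSum t k l (r + 1) b v u =
      columnForm t l v * (columnProd t r (Fin.tail b) (v - 1) * coeff K ι (t k (b 0) u)) +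
        columnForm t (b 0) v * columnReplaceSum t k l r (Fin.tail b) (v - 1) u := by
  simp only [columnReplaceSum, Fin.sum_univ_succ, Finset.mul_sum, columnProd, Fin.tail_update_succ,
    Fin.tail_update_zero, Function.update_self, mul_assoc,
    Function.update_of_ne (Fin.succ_ne_zero _).symm]
  rfl

end Grassmann

namespace IsRTT

open Grassmann

variable [DecidableEq ι] [Fintype ι] {t : ι → ι → K → A} (ht : IsRTT t)

include ht

theorem columnForm_mul_columnForm (l b : ι) (u v : K) :
    (u - v) • (columnForm t l u * columnForm t b v + columnForm t b v * columnForm t l u) =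
      columnForm t l v * columnForm t b u - columnForm t l u * columnForm t b v := by
  conv_rhs =>
    rw [columnForm_mul_columnForm_eq_neg_sum l b u v, columnForm_mul_columnForm_eq_neg_sum l b v u]
  rw [columnForm_mul_columnForm_eq_neg_sum b l v u, columnForm_mul_columnForm_eq_sum l b u v,
    ← sub_eq_add_neg, neg_sub_neg]
  simp only [← Finset.sum_sub_distrib, Finset.smul_sum, ← mul_sub, ← map_sub, ← ht.rtt,
    mul_smul_comm, map_smul]

theorem columnForm_mul_columnForm_sub_one (l b : ι) (u : K) :
    columnForm t l u * columnForm t b (u - 1) = -(columnForm t b u * columnForm t l (u - 1)) := by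
  have h := ht.columnForm_mul_columnForm l b (u - 1) u
  rw [sub_sub_cancel_left, neg_one_smul, neg_add] at h
  rw [← sub_eq_zero, ← sub_eq_zero.mpr h.symm]
  abel

theorem coeff_commutator_columnForm (k l b : ι) (u v : K) :
    (u - v) • (coeff K ι (t k l u) * columnForm t b v -
        columnForm t b v * coeff K ι (t k l u)) =
      columnForm t l u * coeff K ι (t k b v) - columnForm t l v * coeff K ι (t k b u) := by
  simp only [columnForm, Finset.mul_sum, Finset.sum_mul, ← Finset.sum_sub_distrib,
    Finset.smul_sum]
  refine Finset.sum_congr rfl fun i _ => ?_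
  rw [← mul_assoc, coeff_mul_gen]
  simp only [mul_assoc, ← map_mul, ← mul_sub, ← map_sub, ← ht.rtt, mul_smul_comm, map_smul]

theorem columnForm_mul_columnReplaceSum (k l c : ι) (r : ℕ) (b : Fin r → ι) (v u : K) :
    columnForm t c v * columnReplaceSum t k l r b (v - 1) u +
      columnForm t l v * columnReplaceSum t k c r b (v - 1) u = 0 := by
  induction r generalizing v with
  | zero => simp [columnReplaceSum]
  | succ r ih =>
    have hswap := ht.columnForm_mul_columnForm_sub_one
    have htail := congrArg (columnForm t (b 0) v * ·) (ih (Fin.tail b) (v - 1))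
    simp only [mul_add, mul_zero, ← mul_assoc] at htail
    simp only [columnReplaceSum_succ, mul_add, ← mul_assoc]
    rw [hswap c l, hswap c (b 0), hswap l (b 0), ← neg_eq_zero, ← htail]
    simp only [neg_mul]
    abel

theorem coeff_commutator_columnProd_of_ne (k l : ι) (r : ℕ) (b : Fin r → ι) (v u : K)
    (huv : ∀ j : ℕ, u - v + (j + 1) ≠ 0) :
    (u - v) • (coeff K ι (t k l u) * columnProd t r b v -
        columnProd t r b v * coeff K ι (t k l u)) =
      columnForm t l u * contract k (columnProd t r b v) - columnReplaceSum t k l r b v u := by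
  induction r generalizing v l with
  | zero => simp [columnProd, contract_one, columnReplaceSum]
  | succ r ih =>
    have huv' (j : ℕ) : u - (v - 1) + (j + 1) ≠ 0 := by
      convert huv (j + 1) using 1
      push_cast
      ring
    have huv₀ : u - v + 1 ≠ 0 := by simpa using huv 0
    rw [columnReplaceSum_succ, columnProd, contract_columnForm_mul]
    set Y := columnProd t r (Fin.tail b) (v - 1)
    have hcoeff := congrArg (· * Y) (ht.coeff_commutator_columnForm k l (b 0) u v)
    have hform := congrArg (· * contract k Y) (ht.columnForm_mul_columnForm l (b 0) u v)
    have htail := congrArg (columnForm t (b 0) v * ·) (ih l (Fin.tail b) (v - 1) huv')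
    have htail' := congrArg (columnForm t l v * ·) (ih (b 0) (Fin.tail b) (v - 1) huv')
    have hreplace := ht.columnForm_mul_columnReplaceSum k l (b 0) r (Fin.tail b) v u
    simp only [mul_sub, sub_mul, add_mul, smul_mul_assoc, mul_smul_comm, mul_assoc]
      at hcoeff hform htail htail' hreplace ⊢
    -- The induction hypotheses determine the difference of the two sides only up to the factor
    -- `u - v + 1`, whence the genericity assumption.
    refine sub_eq_zero.mp ((smul_eq_zero_iff_right huv₀).mp ?_)
    linear_combination (norm := module)
      (u - v + 1) • hcoeff + (u - v) • htail - htail' + hform + hreplace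

theorem coeff_commutator_columnProd [CharZero K] (k l : ι) (r : ℕ) (b : Fin r → ι) (v u : K) :
    (u - v) • (coeff K ι (t k l u) * columnProd t r b v -
        columnProd t r b v * coeff K ι (t k l u)) =
      columnForm t l u * contract k (columnProd t r b v) - columnReplaceSum t k l r b v u := by
  set X := columnProd t r b v
  have hcomm : IsWeaklyPolynomial fun u => coeff K ι (t k l u) * X - X * coeff K ι (t k l u) :=
    (ht.polynomial k l).map
      ((LinearMap.mulRight K X - LinearMap.mulLeft K X) ∘ₗ (coeff K ι).toLinearMap)
  have hform : IsWeaklyPolynomial fun u => columnForm t l u * contract k X := by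
    simp only [columnForm, Finset.sum_mul, mul_assoc]
    exact IsWeaklyPolynomial.sum _ fun i _ => (ht.polynomial i l).map (LinearMap.mulLeft K _ ∘ₗ
      LinearMap.mulRight K (contract k X) ∘ₗ (coeff K ι).toLinearMap)
  have hreplace : IsWeaklyPolynomial fun u => columnReplaceSum t k l r b v u :=
    IsWeaklyPolynomial.sum _ fun i _ => (ht.polynomial k (b i)).map
      (LinearMap.mulLeft K _ ∘ₗ (coeff K ι).toLinearMap)
  refine sub_eq_zero.mp (((hcomm.sub_smul v).sub (hform.sub hreplace)).eq_zero v (fun m => ?_) u)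
  refine sub_eq_zero.mpr (ht.coeff_commutator_columnProd_of_ne k l r b v (v + m) fun j h => ?_)
  have hmj : ((m + j + 1 : ℕ) : K) = 0 := by rw [← h]; push_cast; ring
  exact Nat.cast_ne_zero.mpr (m + j).succ_ne_zero hmj

end IsRTT

end Grassmann

section QuantumMinors

variable {K A ι : Type*} [Field K] [Ring A] [Algebra K A]

/-- The quantum minor `T^{a_0 a_1 ⋯}_{b_0 b_1 ⋯}(u)` of a matrix `t` of functions, for arbitrary
(possibly repeated) rows `a` and columns `b`. -/
def qminor (t : ι → ι → K → A) {r : ℕ} (a b : Fin r → ι) (u : K) : A :=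
  ∑ σ : Equiv.Perm (Fin r), ((Equiv.Perm.sign σ : ℤ) : K) •
    (List.ofFn fun s : Fin r => t (a (σ s)) (b s) (u - (s : ℕ))).prod

variable {t : ι → ι → K → A}

theorem qminor_zero (a b : Fin 0 → ι) (u : K) : qminor t a b u = 1 := by
  simp [qminor]

theorem qminor_comp_perm_left {r : ℕ} (σ : Equiv.Perm (Fin r)) (a b : Fin r → ι) (u : K) :
    qminor t (a ∘ σ) b u = ((Equiv.Perm.sign σ : ℤ) : K) • qminor t a b u := by
  simp only [qminor, Finset.smul_sum]
  refine (Equiv.sum_comp (Equiv.mulLeft σ⁻¹) _).symm.trans (Finset.sum_congr rfl fun τ _ => ?_)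
  simp [smul_smul]

theorem qminor_eq_zero_of_row_eq [CharZero K] {r : ℕ} {a : Fin r → ι} {i j : Fin r} (hij : i ≠ j)
    (ha : a i = a j) (b : Fin r → ι) (u : K) : qminor t a b u = 0 := by
  have hswap : a ∘ Equiv.swap i j = a := by
    ext s
    rcases eq_or_ne s i with rfl | hsi
    · simp [ha]
    rcases eq_or_ne s j with rfl | hsj
    · simp [ha]
    · simp [Equiv.swap_apply_of_ne_of_ne hsi hsj]
  have : IsAddTorsionFree A := .of_isTorsionFree K A
  refine self_eq_neg.mp ?_
  conv_lhs => rw [← hswap, qminor_comp_perm_left, Equiv.Perm.sign_swap hij]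
  simp

theorem qminor_removeNth_left {r : ℕ} (a b : Fin (r + 1) → ι) (s : Fin (r + 1)) (k : ι) (u : K) :
    qminor t (Fin.cons k (s.removeNth a) : Fin (r + 1) → ι) b u =
      (-1 : K) ^ (s : ℕ) • qminor t (Function.update a s k) b u := by
  rw [← Fin.insertNth_removeNth, ← Fin.insertNth_comp_cycleRange_symm s, qminor_comp_perm_left]
  simp

theorem sum_perm_succ {M : Type*} [AddCommMonoid M] {r : ℕ} (f : Equiv.Perm (Fin (r + 1)) → M) :
    ∑ σ, f σ = ∑ s : Fin (r + 1), ∑ σ : Equiv.Perm (Fin r),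
      f (s.cycleRange.symm * Equiv.Perm.decomposeFin.symm (0, σ)) := by
  refine .trans (Fintype.sum_bijective
    (fun p : Fin (r + 1) × Equiv.Perm (Fin r) =>
      p.1.cycleRange.symm * Equiv.Perm.decomposeFin.symm (0, p.2)) ?_ _ _ fun _ => rfl).symm
    (Fintype.sum_prod_type _)
  refine (Fintype.bijective_iff_injective_and_card _).mpr
    ⟨?_, Fintype.card_congr Equiv.Perm.decomposeFin.symm⟩
  rintro ⟨s, σ⟩ ⟨s', σ'⟩ h
  obtain rfl : s = s' := by simpa using DFunLike.congr_fun h 0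
  simpa using h

theorem qminor_succ {r : ℕ} (a b : Fin (r + 1) → ι) (u : K) :
    qminor t a b u = ∑ s : Fin (r + 1), (-1 : K) ^ (s : ℕ) •
      (t (a s) (b 0) u * qminor t (s.removeNth a) (Fin.tail b) (u - 1)) := by
  rw [qminor, sum_perm_succ]
  simp only [qminor, Finset.mul_sum, Finset.smul_sum]
  refine Finset.sum_congr rfl fun s _ => Finset.sum_congr rfl fun σ _ => ?_
  rw [List.ofFn_succ, List.prod_cons, mul_smul_comm, smul_smul]
  simp [Fin.removeNth, Fin.tail, sub_sub, add_comm (1 : K)]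

end QuantumMinors

section RowCoefficients

variable {K A ι : Type*} [Field K] [Ring A] [Algebra K A]

namespace Grassmann

/-- The coefficient of the product of generators with indices `a 0, a 1, …` in an element of the
Grassmann algebra. -/
def rowCoeff : {r : ℕ} → (Fin r → ι) → Grassmann K A ι →ₗ[K] A
  | 0, _ => constantPart.toLinearMap
  | _ + 1, a => rowCoeff (Fin.tail a) ∘ₗ contract (a 0)

theorem rowCoeff_coeff_mul {r : ℕ} (a : Fin r → ι) (x : A) (y : Grassmann K A ι) :
    rowCoeff a (coeff K ι x * y) = x * rowCoeff a y := by
  induction r generalizing y with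
  | zero => simp [rowCoeff, constantPart_coeff]
  | succ r ih => simp [rowCoeff, contract_coeff_mul, ih]

theorem rowCoeff_mul_coeff {r : ℕ} (a : Fin r → ι) (y : Grassmann K A ι) (x : A) :
    rowCoeff a (y * coeff K ι x) = rowCoeff a y * x := by
  induction r generalizing y with
  | zero => simp [rowCoeff, constantPart_coeff]
  | succ r ih => simp [rowCoeff, contract_mul_coeff, ih]

theorem rowCoeff_contract {r : ℕ} (a : Fin r → ι) (k : ι) (y : Grassmann K A ι) :
    rowCoeff a (contract k y) = rowCoeff (Fin.cons k a : Fin (r + 1) → ι) y :=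
  rfl

variable [DecidableEq ι]

theorem rowCoeff_gen_mul {r : ℕ} (a : Fin (r + 1) → ι) (p : ι) (y : Grassmann K A ι) :
    rowCoeff a (gen K A p * y) =
      ∑ s : Fin (r + 1),
        (-1 : K) ^ (s : ℕ) • if a s = p then rowCoeff (s.removeNth a) y else 0 := by
  induction r generalizing y with
  | zero =>
    simp only [rowCoeff, LinearMap.comp_apply, contract_gen_mul]
    split_ifs <;> simp [constantPart_gen, *]
  | succ r ih =>
    have hcons (s : Fin (r + 1)) :
        Fin.cons (a 0) (s.removeNth (Fin.tail a)) = s.succ.removeNth a := by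
      funext i
      refine Fin.cases ?_ (fun i => ?_) i <;> simp [Fin.removeNth, Fin.tail]
    rw [rowCoeff, LinearMap.comp_apply, contract_gen_mul, map_sub, ih,
      Fin.sum_univ_succ (n := r + 1), sub_eq_add_neg, ← Finset.sum_neg_distrib]
    simp only [rowCoeff_contract, hcons, Fin.tail]
    congr 1
    · split_ifs <;> simp [Fin.removeNth_zero]
    · exact Finset.sum_congr rfl fun s _ => by rw [Fin.val_succ, pow_succ, mul_neg_one, neg_smul]

variable [Fintype ι] {t : ι → ι → K → A}

theorem rowCoeff_columnForm_mul {r : ℕ} (a : Fin (r + 1) → ι) (l : ι) (u : K)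
    (y : Grassmann K A ι) :
    rowCoeff a (columnForm t l u * y) =
      ∑ s : Fin (r + 1), (-1 : K) ^ (s : ℕ) • (t (a s) l u * rowCoeff (s.removeNth a) y) := by
  simp only [columnForm, Finset.sum_mul, map_sum, mul_assoc, rowCoeff_gen_mul,
    rowCoeff_coeff_mul]
  rw [Finset.sum_comm]
  simp

theorem rowCoeff_columnProd {r : ℕ} (a b : Fin r → ι) (u : K) :
    rowCoeff a (columnProd t r b u) = qminor t a b u := by
  induction r generalizing u with
  | zero => simp [rowCoeff, columnProd, qminor_zero]
  | succ r ih => simp only [columnProd, rowCoeff_columnForm_mul, ih, qminor_succ]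

end Grassmann

open Grassmann

variable [Finite ι] {t : ι → ι → K → A}

theorem qminor_succ_last {r : ℕ} (a b : Fin (r + 1) → ι) (u : K) :
    qminor t a b u = ∑ s : Fin (r + 1), (-1 : K) ^ (r + s : ℕ) •
      (qminor t (s.removeNth a) (Fin.init b) u * t (a s) (b (Fin.last r)) (u - r)) := by
  classical
  cases nonempty_fintype ι
  rw [← rowCoeff_columnProd, columnProd_snoc, columnForm, Finset.mul_sum, map_sum]
  simp only [← mul_assoc, columnProd_mul_gen, smul_mul_assoc, map_smul, rowCoeff_mul_coeff,
    rowCoeff_gen_mul, rowCoeff_columnProd, Finset.sum_mul, Finset.smul_sum, smul_smul, ← pow_add,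
    ite_mul, zero_mul, smul_ite, smul_zero]
  rw [Finset.sum_comm]
  simp

end RowCoefficients

section Commutators

variable {K A ι : Type*} [Field K] [CharZero K] [Ring A] [Algebra K A] [Finite ι]

namespace IsRTT

open Grassmann

variable {t : ι → ι → K → A} (ht : IsRTT t)

include ht

/-- [Molev, *Yangians and classical Lie algebras*, Proposition 1.7.1]. -/
theorem commutator_qminor {r : ℕ} (k l : ι) (a b : Fin r → ι) (u v : K) :
    (u - v) • (t k l u * qminor t a b v - qminor t a b v * t k l u) =
      ∑ s, t (a s) l u * qminor t (Function.update a s k) b v -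
        ∑ s, qminor t a (Function.update b s l) v * t k (b s) u := by
  classical
  cases nonempty_fintype ι
  have h := congrArg (rowCoeff a) (ht.coeff_commutator_columnProd k l r b v u)
  simp only [columnReplaceSum, map_smul, map_sub, map_sum, rowCoeff_coeff_mul, rowCoeff_mul_coeff,
    rowCoeff_columnProd] at h
  rw [h]
  congr 1
  cases r with
  | zero => simp [columnProd, contract_one]
  | succ r =>
    simp [rowCoeff_columnForm_mul, rowCoeff_contract, rowCoeff_columnProd, qminor_removeNth_left,
      smul_smul, ← mul_pow]

end IsRTT

end Commutators

section Transposition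

variable {K A ι : Type*} [Field K] [Ring A] [Algebra K A]

/-- The transposed matrix with entries in the opposite algebra. It satisfies the same commutation
relations, so that statements about columns of quantum minors turn into statements about rows. -/
def transposeOp (t : ι → ι → K → A) (i j : ι) (u : K) : Aᵐᵒᵖ :=
  MulOpposite.op (t j i u)

variable {t : ι → ι → K → A}

theorem IsRTT.transposeOp (ht : IsRTT t) : IsRTT (transposeOp t) where
  rtt i j k l u v := by
    have h := congrArg MulOpposite.op (ht.rtt j i l k u v)
    simp only [MulOpposite.op_smul, MulOpposite.op_sub, MulOpposite.op_mul] at h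
    simp only [Yangian.transposeOp]
    linear_combination (norm := module) (-1 : K) • h
  polynomial i j := (ht.polynomial j i).map (MulOpposite.opLinearEquiv K).toLinearMap

theorem qminor_cons_cons {r : ℕ} (k l : ι) (a b : Fin r → ι) (u : K) :
    qminor t (Fin.cons k a : Fin (r + 1) → ι) (Fin.cons l b : Fin (r + 1) → ι) u =
      t k l u * qminor t a b (u - 1) -
        ∑ s, t (a s) l u * qminor t (Function.update a s k) b (u - 1) := by
  rw [qminor_succ, Fin.sum_univ_succ, sub_eq_add_neg (t k l u * _), ← Finset.sum_neg_distrib]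
  congr 1
  · simp
  cases r with
  | zero => simp
  | succ r =>
    refine Finset.sum_congr rfl fun s _ => ?_
    have hcons : s.succ.removeNth (Fin.cons k a : Fin (r + 2) → ι) =
        Fin.cons k (s.removeNth a) := by
      funext i
      refine Fin.cases ?_ (fun i => ?_) i <;> simp [Fin.removeNth]
    simp [hcons, qminor_removeNth_left, smul_smul, pow_succ, ← mul_pow]

namespace IsRTT

variable [CharZero K] [Finite ι] (ht : IsRTT t)

include ht

theorem op_qminor {r : ℕ} (a b : Fin r → ι) (u : K) :
    MulOpposite.op (qminor t a b u) = qminor (Yangian.transposeOp t) b a u := by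
  induction r generalizing u with
  | zero => simp [qminor_zero]
  | succ r ih =>
    obtain ⟨k, a, rfl⟩ : ∃ k a', a = Fin.cons k a' := ⟨_, _, (Fin.cons_self_tail a).symm⟩
    obtain ⟨l, b, rfl⟩ : ∃ l b', b = Fin.cons l b' := ⟨_, _, (Fin.cons_self_tail b).symm⟩
    have hcomm := ht.commutator_qminor k l a b u (u - 1)
    rw [sub_sub_cancel, one_smul, sub_eq_sub_iff_sub_eq_sub] at hcomm
    simp [qminor_cons_cons, hcomm, ← ih, Yangian.transposeOp]

theorem qminor_eq_zero_of_col_eq {r : ℕ} (a : Fin r → ι) {b : Fin r → ι} {i j : Fin r}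
    (hij : i ≠ j) (hb : b i = b j) (u : K) : qminor t a b u = 0 := by
  rw [← MulOpposite.op_eq_zero_iff, ht.op_qminor, qminor_eq_zero_of_row_eq hij hb]

theorem qminor_removeNth_right {r : ℕ} (a b : Fin (r + 1) → ι) (s : Fin (r + 1)) (l : ι) (u : K) :
    qminor t a (Fin.cons l (s.removeNth b) : Fin (r + 1) → ι) u =
      (-1 : K) ^ (s : ℕ) • qminor t a (Function.update b s l) u := by
  rw [← MulOpposite.op_inj, MulOpposite.op_smul, ht.op_qminor, ht.op_qminor, qminor_removeNth_left]

theorem qminor_succ_row {r : ℕ} (a b : Fin (r + 1) → ι) (u : K) :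
    qminor t a b u = ∑ s : Fin (r + 1), (-1 : K) ^ (s : ℕ) •
      (qminor t (Fin.tail a) (s.removeNth b) (u - 1) * t (a 0) (b s) u) := by
  rw [← MulOpposite.op_inj, ht.op_qminor, qminor_succ]
  simp [← ht.op_qminor, Yangian.transposeOp]

theorem qminor_update_col_eq_sum {r : ℕ} (a b : Fin (r + 1) → ι) (s : Fin (r + 1)) (l : ι)
    (u : K) :
    qminor t a (Function.update b s l) u = (-1 : K) ^ (s : ℕ) • ∑ p : Fin (r + 1),
      (-1 : K) ^ (p : ℕ) • (t (a p) l u * qminor t (p.removeNth a) (s.removeNth b) (u - 1)) := by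
  rw [← inv_smul_eq_iff₀ (by simp), ← inv_pow, inv_neg_one, ← ht.qminor_removeNth_right,
    qminor_succ]
  simp

end IsRTT

end Transposition

section CommutationRelations

variable {K A ι : Type*} [Field K] [CharZero K] [Ring A] [Algebra K A] {t : ι → ι → K → A}

/-- `t` is the matrix of quadratic polynomials `t_ij(u) = δ_ij u² + E_ij u + F_ij`. -/
structure IsMonicQuadratic [DecidableEq ι] (t : ι → ι → K → A) (E F : ι → ι → A) : Prop where
  eq : ∀ i j u, t i j u = u ^ 2 • (if i = j then 1 else 0) + u • E i j + F i j

namespace IsRTT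

variable [Finite ι] (ht : IsRTT t)

include ht

theorem commutator_row_qminor {r : ℕ} (a b : Fin r → ι) (i : Fin r) (l : ι) (u v : K) :
    (u - v) • (t (a i) l u * qminor t a b v - qminor t a b v * t (a i) l u) =
      t (a i) l u * qminor t a b v -
        ∑ s, qminor t a (Function.update b s l) v * t (a i) (b s) u := by
  rw [ht.commutator_qminor, Finset.sum_eq_single i, Function.update_eq_self]
  · intro s _ hsi
    rw [qminor_eq_zero_of_row_eq hsi (by simp [hsi.symm]), mul_zero]
  · simp

theorem commute_entry_qminor {r : ℕ} (a b : Fin r → ι) (i j : Fin r) (u v : K) :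
    Commute (t (a i) (b j) u) (qminor t a b v) := by
  set M := qminor t a b v
  have hpoly : IsWeaklyPolynomial fun u => t (a i) (b j) u * M - M * t (a i) (b j) u :=
    (ht.polynomial (a i) (b j)).map (LinearMap.mulRight K M - LinearMap.mulLeft K M)
  refine sub_eq_zero.mp (hpoly.eq_zero (v + 2) (fun m => ?_) u)
  have hcomm := ht.commutator_row_qminor a b i (b j) (v + 2 + m) v
  rw [Finset.sum_eq_single j, Function.update_eq_self] at hcomm
  · have hm : (m + 1 : K) ≠ 0 := Nat.cast_add_one_ne_zero m
    refine (smul_eq_zero_iff_right hm).mp ?_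
    linear_combination (norm := module) hcomm
  · intro s _ hsj
    rw [ht.qminor_eq_zero_of_col_eq a hsj (by simp [hsj.symm]), zero_mul]
  · simp

theorem commute_qminor_qminor {q r : ℕ} (a b : Fin r → ι) (f g : Fin q → Fin r) (u v : K) :
    Commute (qminor t (a ∘ f) (b ∘ g) u) (qminor t a b v) := by
  refine Commute.sum_left _ _ _ fun σ _ => (Commute.list_prod_left _ _ fun x hx => ?_).smul_left _
  obtain ⟨s, rfl⟩ := List.mem_ofFn.mp hx
  exact ht.commute_entry_qminor a b _ _ _ _

theorem sum_qminor_update_col_mul {r : ℕ} (a b : Fin r → ι) (s : Fin r) (l : ι) (u v : K) :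
    ∑ i, qminor t a (Function.update b i l) v * qminor t a (Function.update b s (b i)) u =
      qminor t a (Function.update b s l) v * qminor t a b u := by
  rw [Finset.sum_eq_single s, Function.update_eq_self]
  · intro i _ his
    rw [ht.qminor_eq_zero_of_col_eq a (b := Function.update b s (b i)) his (by simp [his]),
      mul_zero]
  · simp

theorem commutator_qminor_update_col {r : ℕ} (a b : Fin r → ι) (s : Fin r) (l : ι) (u v : K) :
    (u - v) • (qminor t a (Function.update b s l) u * qminor t a b v -
        qminor t a b v * qminor t a (Function.update b s l) u) =
      qminor t a (Function.update b s l) u * qminor t a b v -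
        qminor t a (Function.update b s l) v * qminor t a b u := by
  cases r with
  | zero => exact s.elim0
  | succ r =>
    set M := qminor t a b v
    let N (p : Fin (r + 1)) : A := qminor t (p.removeNth a) (s.removeNth b) (u - 1)
    have hN (p : Fin (r + 1)) : N p * M = M * N p :=
      ht.commute_qminor_qminor a b p.succAbove s.succAbove (u - 1) v
    have hleft : qminor t a (Function.update b s l) u * M = (-1 : K) ^ (s : ℕ) •
        ∑ p : Fin (r + 1), (-1 : K) ^ (p : ℕ) • (t (a p) l u * M * N p) := by
      simp only [ht.qminor_update_col_eq_sum a b s l u, smul_mul_assoc, Finset.sum_mul, mul_assoc,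
        ← hN, N]
    have hright : M * qminor t a (Function.update b s l) u = (-1 : K) ^ (s : ℕ) •
        ∑ p : Fin (r + 1), (-1 : K) ^ (p : ℕ) • (M * t (a p) l u * N p) := by
      simp only [ht.qminor_update_col_eq_sum a b s l u, mul_smul_comm, Finset.mul_sum, mul_assoc, N]
    have hexchange : qminor t a (Function.update b s l) v * qminor t a b u = (-1 : K) ^ (s : ℕ) •
        ∑ p : Fin (r + 1), (-1 : K) ^ (p : ℕ) •
          ((∑ i, qminor t a (Function.update b i l) v * t (a p) (b i) u) * N p) := by
      rw [← ht.sum_qminor_update_col_mul]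
      simp only [ht.qminor_update_col_eq_sum a b s _ u, Finset.sum_mul, mul_smul_comm,
        Finset.mul_sum, Finset.smul_sum, mul_assoc, N]
      exact Finset.sum_comm
    rw [hleft, hright, hexchange, ← smul_sub, ← smul_sub, smul_comm]
    simp only [← Finset.sum_sub_distrib, ← smul_sub, ← sub_mul, Finset.smul_sum,
      smul_comm (u - v)]
    refine Finset.sum_congr rfl fun p _ => ?_
    rw [← smul_mul_assoc, ht.commutator_row_qminor]

theorem qminor_update_col_mul {r : ℕ} (a b : Fin r → ι) (s : Fin r) (l : ι) (u v : K) :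
    (u - v) • (qminor t a (Function.update b s l) u * qminor t a b v) =
      (u - v + 1) • (qminor t a b v * qminor t a (Function.update b s l) u) -
        qminor t a b u * qminor t a (Function.update b s l) v := by
  have h := ht.commutator_qminor_update_col a (Function.update b s l) s (b s) v u
  rw [Function.update_idem, Function.update_eq_self] at h
  linear_combination (norm := module) h

theorem qminor_update_row_mul_sub_one {r : ℕ} (a b : Fin r → ι) (s : Fin r) (k : ι) (u : K) :
    qminor t (Function.update a s k) b u * qminor t a b (u - 1) =
      qminor t a b u * qminor t (Function.update a s k) b (u - 1) := by
  have h := ht.transposeOp.commutator_qminor_update_col b a s k u (u - 1)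
  rw [sub_sub_cancel, one_smul, sub_right_inj] at h
  simpa only [← ht.op_qminor, ← MulOpposite.op_mul, MulOpposite.op_inj] using h

theorem commutator_linear_coeff_qminor [DecidableEq ι] {E F : ι → ι → A}
    (hE : IsMonicQuadratic t E F) {r : ℕ} (k l : ι) (a b : Fin r → ι) (v : K) :
    E k l * qminor t a b v - qminor t a b v * E k l =
      (∑ s, if a s = l then qminor t (Function.update a s k) b v else 0) -
        ∑ s, if b s = k then qminor t a (Function.update b s l) v else 0 := by
  -- Halved second differences at `u = 0` pick out the coefficient of `u ^ 2`.
  let R (u : K) := ∑ s, t (a s) l u * qminor t (Function.update a s k) b v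
  let C (u : K) := ∑ s, qminor t a (Function.update b s l) v * t k (b s) u
  have hδ (i j : ι) : (2⁻¹ : K) • (t i j 1 - (2 : K) • t i j 0 + t i j (-1)) =
      if i = j then 1 else 0 := by
    simp only [hE.eq]
    split_ifs <;> module
  have hrow : (∑ s, if a s = l then qminor t (Function.update a s k) b v else 0) =
      (2⁻¹ : K) • (R 1 - (2 : K) • R 0 + R (-1)) := by
    simp only [R, Finset.smul_sum, ← Finset.sum_sub_distrib, ← Finset.sum_add_distrib,
      ← smul_mul_assoc, ← sub_mul, ← add_mul, hδ, ite_mul, one_mul, zero_mul]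
  have hcol : (∑ s, if b s = k then qminor t a (Function.update b s l) v else 0) =
      (2⁻¹ : K) • (C 1 - (2 : K) • C 0 + C (-1)) := by
    simp only [C, Finset.smul_sum, ← Finset.sum_sub_distrib, ← Finset.sum_add_distrib,
      ← mul_smul_comm, ← mul_sub, ← mul_add, hδ, mul_ite, mul_one, mul_zero, eq_comm]
  have hcomm (u : K) : (u - v) • (u • (E k l * qminor t a b v - qminor t a b v * E k l) +
      (F k l * qminor t a b v - qminor t a b v * F k l)) = R u - C u := by
    rw [← ht.commutator_qminor, hE.eq]
    split_ifs <;> simp only [add_mul, mul_add, smul_mul_assoc, mul_smul_comm, one_mul, mul_one,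
      smul_zero, zero_mul, mul_zero] <;> module
  rw [hrow, hcol]
  linear_combination (norm := module)
    (2⁻¹ : K) • hcomm 1 - hcomm 0 + (2⁻¹ : K) • hcomm (-1)

end IsRTT

end CommutationRelations

section AscendingProducts

variable {K A : Type*} [CommRing K] [Ring A]

/-- The product `τ(v+k-1) ⋯ τ(v+1) τ(v)`; for a lowering operator `τ` this is `𝒯(v, k)`. -/
def ascProd (τ : K → A) (v : K) : ℕ → A
  | 0 => 1
  | k + 1 => τ (v + k) * ascProd τ v k

variable {τ D R : K → A}

theorem ascProd_succ (v : K) (k : ℕ) : ascProd τ v (k + 1) = τ (v + k) * ascProd τ v k :=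
  rfl

theorem commute_ascProd {x : A} (h : ∀ v, Commute x (τ v)) (v : K) (k : ℕ) :
    Commute x (ascProd τ v k) := by
  induction k with
  | zero => exact Commute.one_right x
  | succ k ih => exact (h _).mul_right ih

theorem mul_ascProd_of_shift (hR : ∀ x, R x * τ (x - 1) = τ x * R (x - 1)) (v : K) (k : ℕ) :
    R (v + k) * ascProd τ v k = ascProd τ (v + 1) k * R v := by
  induction k with
  | zero => simp [ascProd]
  | succ k ih =>
    have hx : v + (k + 1 : ℕ) - 1 = v + k := by push_cast; ring
    have hx' : v + 1 + k = v + (k + 1 : ℕ) := by push_cast; ring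
    have h := hR (v + (k + 1 : ℕ))
    rw [hx] at h
    rw [ascProd_succ, ascProd_succ, ← mul_assoc, h, mul_assoc, ih, mul_assoc, hx']

variable [Algebra K A]

theorem smul_mul_ascProd_succ (hτ : ∀ x y, Commute (τ x) (τ y))
    (hD : ∀ x y, (x - y) • (D x * τ y) = (x - y + 1) • (τ y * D x) - τ x * D y)
    (x v : K) (k : ℕ) :
    (x - v - k) • (D x * ascProd τ v (k + 1)) = (x - v + 1) • (ascProd τ v (k + 1) * D x) -
      (k + 1 : K) • (τ x * ascProd τ v k * D (v + k)) := by
  induction k generalizing x with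
  | zero => simpa [ascProd] using hD x v
  | succ k ih =>
    set P := ascProd τ v (k + 1)
    set Q := ascProd τ v k
    set y : K := v + (k + 1 : ℕ) with hy
    have hstep := congrArg (· * P) (hD x y)
    have hx := congrArg (τ y * ·) (ih x)
    have hxy := congrArg (τ x * ·) (ih y)
    simp only [smul_mul_assoc, sub_mul, mul_assoc, mul_sub, mul_smul_comm] at hstep hx hxy
    have hcomm : τ y * (τ x * (Q * D (v + k))) = τ x * (τ y * (Q * D (v + k))) := by
      rw [← mul_assoc, hτ y x, mul_assoc]
    rw [hcomm] at hx
    rw [ascProd_succ v (k + 1)]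
    simp only [mul_assoc, hy, Nat.cast_succ] at hstep hx hxy ⊢
    linear_combination (norm := module) hstep + hx - hxy

theorem commutator_ascProd_succ {E : A} (hτ : ∀ x y, Commute (τ x) (τ y))
    (hE : ∀ x, E * τ x - τ x * E = R x - D x)
    (hR : ∀ x, R x * τ (x - 1) = τ x * R (x - 1))
    (hD : ∀ x y, (x - y) • (D x * τ y) = (x - y + 1) • (τ y * D x) - τ x * D y)
    (v : K) (k : ℕ) :
    E * ascProd τ v (k + 1) - ascProd τ v (k + 1) * E =
      (k + 1 : K) • (ascProd τ (v + 1) k * R v - ascProd τ v k * D (v + k)) := by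
  induction k with
  | zero => simpa [ascProd] using hE v
  | succ k ih =>
    have hRP := mul_ascProd_of_shift hR v (k + 1)
    have hDP := smul_mul_ascProd_succ hτ hD (v + (k + 1 : ℕ)) v k
    have hEP := congrArg (· * ascProd τ v (k + 1)) (hE (v + (k + 1 : ℕ)))
    have hPE := congrArg (τ (v + (k + 1 : ℕ)) * ·) ih
    have hshift : ascProd τ (v + 1) (k + 1) = τ (v + (k + 1 : ℕ)) * ascProd τ (v + 1) k := by
      rw [ascProd_succ, Nat.cast_succ, add_right_comm, add_assoc]
    rw [ascProd_succ v (k + 1), hshift]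
    rw [hshift] at hRP
    simp only [sub_mul, mul_sub, mul_smul_comm, mul_assoc] at hEP hPE hRP hDP ⊢
    rw [hRP] at hEP
    simp only [Nat.cast_succ] at hEP hPE hDP ⊢
    linear_combination (norm := module) hEP + hPE - hDP

end AscendingProducts

section HighestVector

variable {K V ι : Type*} [Field K] [AddCommGroup V] [Module K V] [LinearOrder ι]

/-- `ζ` is a highest vector for the matrix `t` of operators, with highest weight `c`. -/
structure IsHighestVector (t : ι → ι → K → Module.End K V) (c : ι → K → K) (ζ : V) : Prop where
  upper : ∀ i j u, i < j → t i j u ζ = 0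
  diag : ∀ i u, t i i u ζ = c i u • ζ

variable {t : ι → ι → K → Module.End K V} {c : ι → K → K} {ζ : V}

namespace IsHighestVector

theorem linear_coeff_apply_eq_zero (h : IsHighestVector t c ζ) {E F : ι → ι → Module.End K V}
    (hE : IsMonicQuadratic t E F) {k l : ι} (hkl : k < l) : E k l ζ = 0 := by
  have h₀ := h.upper k l 0 hkl
  have h₁ := h.upper k l 1 hkl
  simp only [hE.eq, if_neg hkl.ne, smul_zero, zero_smul, one_smul, zero_add] at h₀ h₁
  simpa [h₀] using h₁

variable [Finite ι]

theorem qminor_apply_eq_zero [CharZero K] (h : IsHighestVector t c ζ) (ht : IsRTT t) {r : ℕ}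
    {a b : Fin r → ι} (s : Fin r) (hs : ∀ i, a s < b i) (u : K) : qminor t a b u ζ = 0 := by
  cases r with
  | zero => exact s.elim0
  | succ r =>
    have hmove := qminor_removeNth_left (t := t) a b s (a s) u
    rw [Function.update_eq_self, ht.qminor_succ_row] at hmove
    have hne : (-1 : K) ^ (s : ℕ) ≠ 0 := by simp
    rw [← smul_eq_zero_iff_right hne, ← LinearMap.smul_apply, ← hmove]
    simp [h.upper _ _ _ (hs _)]

theorem qminor_succ_apply (h : IsHighestVector t c ζ) {r : ℕ} {a b : Fin (r + 1) → ι}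
    (hab : a (Fin.last r) = b (Fin.last r)) (hlt : ∀ s : Fin r, a s.castSucc < b (Fin.last r))
    (u : K) : qminor t a b u ζ =
      c (b (Fin.last r)) (u - r) • qminor t (Fin.init a) (Fin.init b) u ζ := by
  rw [qminor_succ_last, Fin.sum_univ_castSucc]
  simp [h.upper _ _ _ (hlt _), hab, h.diag, ← two_mul]

theorem qminor_add_apply (h : IsHighestVector t c ζ) {m p : ℕ}
    {a b : Fin (m + p) → ι} (ha : StrictMono a)
    (hab : ∀ s : Fin p, a (Fin.natAdd m s) = b (Fin.natAdd m s)) (u : K) :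
    qminor t a b u ζ =
      (∏ s : Fin p, c (b (Fin.natAdd m s)) (u - (m + (s : ℕ) : ℕ))) •
        qminor t (a ∘ Fin.castAdd p) (b ∘ Fin.castAdd p) u ζ := by
  induction p with
  | zero => simp
  | succ p ih =>
    have hlast : a (Fin.last (m + p)) = b (Fin.last (m + p)) := hab (Fin.last p)
    have hsucc := h.qminor_succ_apply (a := a) (b := b) hlast
      (fun s => hlast ▸ ha (Fin.castSucc_lt_last s)) u
    rw [hsucc, ih (a := Fin.init a) (b := Fin.init b) (fun i j hij => ha (by simpa using hij))
      fun s => hab s.castSucc, smul_smul, Fin.prod_univ_castSucc, mul_comm]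
    rfl

end IsHighestVector

end HighestVector

section LinearCoefficient

variable {K A ι : Type*} [Field K] [CharZero K] [Ring A] [Algebra K A] [Finite ι]
  {t : ι → ι → K → A}

theorem IsRTT.commutator_linear_coeff_ascProd [DecidableEq ι] (ht : IsRTT t) {E F : ι → ι → A}
    (hE : IsMonicQuadratic t E F) {r : ℕ} (k l : ι) (a b : Fin r → ι) (v : K) (m : ℕ) :
    E k l * ascProd (qminor t a b) v (m + 1) - ascProd (qminor t a b) v (m + 1) * E k l =
      (m + 1 : K) •
        (ascProd (qminor t a b) (v + 1) m *
            (∑ s, if a s = l then qminor t (Function.update a s k) b v else 0) -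
          ascProd (qminor t a b) v m *
            ∑ s, if b s = k then qminor t a (Function.update b s l) (v + m) else 0) := by
  refine commutator_ascProd_succ (τ := qminor t a b)
    (R := fun x => ∑ s, if a s = l then qminor t (Function.update a s k) b x else 0)
    (D := fun x => ∑ s, if b s = k then qminor t a (Function.update b s l) x else 0)
    (fun x y => ht.commute_qminor_qminor a b id id x y)
    (ht.commutator_linear_coeff_qminor hE k l a b) (fun x => ?_) (fun x y => ?_) v m
  · simp only [Finset.sum_mul, Finset.mul_sum, ite_mul, mul_ite, zero_mul, mul_zero,
      ht.qminor_update_row_mul_sub_one]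
  · simp only [Finset.sum_mul, Finset.mul_sum, Finset.smul_sum, ite_mul, mul_ite, zero_mul,
      mul_zero, smul_ite, smul_zero, ← Finset.sum_sub_distrib]
    exact Finset.sum_congr rfl fun s _ => by split_ifs <;> simp [ht.qminor_update_col_mul]

theorem IsRTT.qminor_snoc_removeNth_right (ht : IsRTT t) {r : ℕ} (a b : Fin (r + 1) → ι)
    (s : Fin (r + 1)) (l : ι) (u : K) :
    qminor t a (Fin.snoc (s.removeNth b) l : Fin (r + 1) → ι) u =
      (-1 : K) ^ (r + s : ℕ) • qminor t a (Function.update b s l) u := by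
  have h := ht.qminor_removeNth_right a (Fin.snoc (s.removeNth b) l) (Fin.last r) l u
  rw [Fin.removeNth_last, Fin.init_snoc, ht.qminor_removeNth_right, Fin.update_snoc_last,
    Fin.val_last] at h
  rw [pow_add, mul_smul, h, smul_smul, ← mul_pow]
  simp

end LinearCoefficient

section ColumnSequences

variable {α : Type*} {q p : ℕ} (b : Fin (q + (p + 1)) → α) (l : α)

theorem snoc_removeNth_castAdd (s : Fin q) :
    (Fin.snoc (α := fun _ => α) ((Fin.natAdd q (0 : Fin (p + 1))).removeNth b) l :
      Fin (q + p + 1) → α) (Fin.castAdd p s).castSucc = b (Fin.castAdd (p + 1) s) := by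
  have hlt : (Fin.castAdd p s).castSucc < Fin.natAdd q (0 : Fin (p + 1)) := by
    simp [Fin.lt_def]
  rw [Fin.snoc_castSucc, Fin.removeNth_apply, Fin.succAbove_of_castSucc_lt _ _ hlt]
  rfl

theorem snoc_removeNth_natAdd (s : Fin p) :
    (Fin.snoc (α := fun _ => α) ((Fin.natAdd q (0 : Fin (p + 1))).removeNth b) l :
      Fin (q + p + 1) → α) (Fin.natAdd q s).castSucc = b (Fin.natAdd q s.succ) := by
  have hle : Fin.natAdd q (0 : Fin (p + 1)) ≤ (Fin.natAdd q s).castSucc := by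
    simp [Fin.le_def]
  rw [Fin.snoc_castSucc, Fin.removeNth_apply, Fin.succAbove_of_le_castSucc _ _ hle]
  rfl

end ColumnSequences

section HighestVectorStrings

variable {K V ι : Type*} [Field K] [CharZero K] [AddCommGroup V] [Module K V] [LinearOrder ι]
  [Finite ι] {t : ι → ι → K → Module.End K V} {c : ι → K → K} {ζ : V}
  {E F : ι → ι → Module.End K V}

namespace IsHighestVector

theorem linear_coeff_ascProd_apply (h : IsHighestVector t c ζ) (ht : IsRTT t)
    (hE : IsMonicQuadratic t E F) {r : ℕ} {a b : Fin r → ι} (ha : Function.Injective a)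
    (hb : Function.Injective b) {p q : Fin r} (hqp : b q < a p) (v : K) (m : ℕ) :
    E (b q) (a p) (ascProd (qminor t a b) v (m + 1) ζ) = (m + 1 : K) •
      (ascProd (qminor t a b) (v + 1) m (qminor t (Function.update a p (b q)) b v ζ) -
        ascProd (qminor t a b) v m (qminor t a (Function.update b q (a p)) (v + m) ζ)) := by
  have hcomm := LinearMap.congr_fun
    (ht.commutator_linear_coeff_ascProd hE (b q) (a p) a b v m) ζ
  simpa [ha.eq_iff, hb.eq_iff, h.linear_coeff_apply_eq_zero hE hqp] using hcomm

theorem linear_coeff_ascProd_apply_eq_zero (h : IsHighestVector t c ζ) (ht : IsRTT t)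
    (hE : IsMonicQuadratic t E F) {r : ℕ} {a b : Fin r → ι} {k l : ι} (hkl : k < l)
    (hk : ∀ s, k < b s) (v : K) (m : ℕ) :
    E k l (ascProd (qminor t a b) v (m + 1) ζ) = 0 := by
  have hcomm := LinearMap.congr_fun (ht.commutator_linear_coeff_ascProd hE k l a b v m) ζ
  have hrow (s : Fin r) : qminor t (Function.update a s k) b v ζ = 0 :=
    h.qminor_apply_eq_zero ht s (by simpa using hk) v
  simpa [apply_ite, ite_apply, hrow, (hk _).ne', h.linear_coeff_apply_eq_zero hE hkl] using hcomm

theorem linear_coeff_zero_ascProd_apply (h : IsHighestVector t c ζ) (ht : IsRTT t)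
    (hE : IsMonicQuadratic t E F) {r : ℕ} {a b : Fin (r + 1) → ι} (ha : Function.Injective a)
    (hb : Function.Injective b) (hab : Fin.init a = Fin.tail b) (hlt : b 0 < a (Fin.last r))
    (v : K) (m : ℕ) :
    E (b 0) (a (Fin.last r)) (ascProd (qminor t a b) v (m + 1) ζ) =
      ((-1 : K) ^ r * (m + 1)) •
        (ascProd (qminor t a b) (v + 1) m (qminor t b b v ζ) -
          ascProd (qminor t a b) v m (qminor t a a (v + m) ζ)) := by
  have hrow := qminor_removeNth_left (t := t) a b (Fin.last r) (b 0) v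
  have hcol := ht.qminor_snoc_removeNth_right a b 0 (a (Fin.last r)) (v + m)
  rw [Fin.removeNth_last, hab, Fin.cons_self_tail] at hrow
  rw [Fin.removeNth_zero, ← hab, Fin.snoc_init_self] at hcol
  have hsign : (-1 : K) ^ r * (m + 1) * (-1) ^ r = m + 1 := by
    rw [mul_right_comm, ← mul_pow]
    simp
  rw [h.linear_coeff_ascProd_apply ht hE ha hb hlt, hrow, hcol]
  simp [← smul_sub, smul_smul, hsign]

theorem qminor_update_col_apply (h : IsHighestVector t c ζ) (ht : IsRTT t) {q p : ℕ}
    {a b : Fin (q + (p + 1)) → ι} (ha : StrictMono a)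
    (hab : (Fin.init a : Fin (q + p) → ι) = Fin.tail b) (u : K) :
    qminor t a (Function.update b (Fin.natAdd q 0) (a (Fin.last (q + p)))) u ζ =
      ((-1 : K) ^ p * ∏ s : Fin (p + 1), c (a (Fin.natAdd q s)) (u - (q + (s : ℕ) : ℕ))) •
        qminor t (a ∘ Fin.castAdd (p + 1)) (b ∘ Fin.castAdd (p + 1)) u ζ := by
  set b' : Fin (q + (p + 1)) → ι :=
    Fin.snoc (α := fun _ => ι) ((Fin.natAdd q (0 : Fin (p + 1))).removeNth b)
      (a (Fin.last (q + p)))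
  have hright (s : Fin (p + 1)) : a (Fin.natAdd q s) = b' (Fin.natAdd q s) := by
    refine Fin.lastCases ?_ (fun s => ?_) s
    · exact (Fin.snoc_last (α := fun _ => ι) (n := q + p) (a (Fin.last (q + p))) _).symm
    · exact (congrFun hab (Fin.natAdd q s)).trans (snoc_removeNth_natAdd b _ s).symm
  have hleft : b' ∘ Fin.castAdd (p + 1) = b ∘ Fin.castAdd (p + 1) :=
    funext (snoc_removeNth_castAdd b _)
  have hsnoc : qminor t a b' u = (-1 : K) ^ (q + p + q) •
      qminor t a (Function.update b (Fin.natAdd q 0) (a (Fin.last (q + p)))) u :=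
    ht.qminor_snoc_removeNth_right (r := q + p) a b (Fin.natAdd q (0 : Fin (p + 1)))
      (a (Fin.last (q + p))) u
  have hsign : (-1 : K) ^ p * (-1) ^ (q + p + q) = 1 := by
    rw [← pow_add]
    exact Even.neg_one_pow ⟨q + p, by ring⟩
  have hupdate : qminor t a (Function.update b (Fin.natAdd q 0) (a (Fin.last (q + p)))) u =
      (-1 : K) ^ p • qminor t a b' u := by
    rw [hsnoc, smul_smul, hsign, one_smul]
  rw [hupdate, LinearMap.smul_apply, h.qminor_add_apply ha hright, hleft, smul_smul]
  simp only [hright]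

theorem linear_coeff_natAdd_ascProd_apply (h : IsHighestVector t c ζ) (ht : IsRTT t)
    (hE : IsMonicQuadratic t E F) {q p : ℕ} (hq : 0 < q) {a b : Fin (q + (p + 1)) → ι}
    (ha : StrictMono a) (hb : Function.Injective b)
    (hab : (Fin.init a : Fin (q + p) → ι) = Fin.tail b) (v : K) (m : ℕ) :
    E (b (Fin.natAdd q 0)) (a (Fin.last (q + p))) (ascProd (qminor t a b) v (m + 1) ζ) =
      ((-1 : K) ^ (p + 1) * (m + 1) *
          ∏ s : Fin (p + 1), c (a (Fin.natAdd q s)) (v + m - (q + (s : ℕ) : ℕ))) •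
        qminor t (a ∘ Fin.castAdd (p + 1)) (b ∘ Fin.castAdd (p + 1)) (v + m)
          (ascProd (qminor t a b) v m ζ) := by
  have hprev (s : Fin (q + p)) : b s.succ = a s.castSucc := congrFun hab.symm s
  let s₀ : Fin (q + p) := ⟨q - 1, by omega⟩
  have hs₀ : s₀.succ = Fin.natAdd q (0 : Fin (p + 1)) := by
    simp only [s₀, Fin.ext_iff, Fin.val_succ, Fin.val_natAdd, Fin.val_zero]
    omega
  have hlt : b (Fin.natAdd q 0) < a (Fin.last (q + p)) := by
    rw [← hs₀, hprev]
    exact ha (Fin.castSucc_lt_last s₀)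
  have hrow : qminor t (Function.update a (Fin.last (q + p)) (b (Fin.natAdd q 0))) b v = 0 :=
    qminor_eq_zero_of_row_eq (Fin.castSucc_lt_last s₀).ne (by
      rw [← hs₀, hprev, Function.update_self,
        Function.update_of_ne (Fin.castSucc_lt_last s₀).ne]) b v
  have hcomm : Commute (qminor t (a ∘ Fin.castAdd (p + 1)) (b ∘ Fin.castAdd (p + 1)) (v + m))
      (ascProd (qminor t a b) v m) :=
    commute_ascProd (ht.commute_qminor_qminor a b _ _ _) v m
  rw [h.linear_coeff_ascProd_apply ht hE ha.injective hb hlt, hrow,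
    h.qminor_update_col_apply ht ha hab]
  have hcommζ := LinearMap.congr_fun hcomm.eq ζ
  simp only [Module.End.mul_apply] at hcommζ
  rw [hcommζ, LinearMap.zero_apply, map_zero, map_smul]
  module

end IsHighestVector

end HighestVectorStrings

section ConsecutiveIndices

variable {n : ℕ}

theorem idxSeq_strictMono (o r : ℕ) (h : o + r ≤ n) : StrictMono (idxSeq n o r h) := by
  intro i j hij
  simpa [idxSeq] using hij

theorem init_idxSeq_eq_tail_idxSeq {a r : ℕ} (ha : 1 ≤ a) (har : a + (r + 1) ≤ n)
    (har' : a - 1 + (r + 1) ≤ n) :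
    Fin.init (idxSeq n a (r + 1) har) = Fin.tail (idxSeq n (a - 1) (r + 1) har') := by
  funext s
  simp only [Fin.init, Fin.tail, idxSeq, Fin.ext_iff, Fin.val_castSucc, Fin.val_succ]
  omega

theorem prod_filter_natAdd_le {M : Type*} [CommMonoid M] (i p : ℕ) (f : Fin (i + p) → M) :
    ∏ j ∈ Finset.univ.filter (fun j : Fin (i + p) => i ≤ (j : ℕ)), f j =
      ∏ s : Fin p, f (Fin.natAdd i s) := by
  simp [Finset.prod_filter, Fin.prod_univ_add, (Fin.isLt _).not_ge]

variable {K V : Type*} [Field K] [CharZero K] [AddCommGroup V] [Module K V]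
  {t : Fin n → Fin n → K → Module.End K V} {c : Fin n → K → K} {ζ : V}
  {E F : Fin n → Fin n → Module.End K V}

namespace IsHighestVector

theorem linear_coeff_ascProd_idxSeq_apply_of_lt (h : IsHighestVector t c ζ) (ht : IsRTT t)
    (hE : IsMonicQuadratic t E F) {a r i : ℕ} (hi : 1 ≤ i) (hia : i < a) (har : a + r = n)
    (v : K) (m : ℕ) :
    E ⟨i - 1, by omega⟩ ⟨n - 1, by omega⟩
      (ascProd (qminor t (idxSeq n a r (by omega)) (idxSeq n (a - 1) r (by omega))) v (m + 1) ζ) =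
        0 :=
  h.linear_coeff_ascProd_apply_eq_zero ht hE (Fin.mk_lt_mk.mpr (by omega))
    (fun s => Fin.mk_lt_mk.mpr (by omega)) v m

theorem linear_coeff_ascProd_idxSeq_apply_of_gt (h : IsHighestVector t c ζ) (ht : IsRTT t)
    (hE : IsMonicQuadratic t E F) {a r q i : ℕ} (ha : 1 ≤ a) (hq : 0 < q) (haq : a + q = i)
    (hin : i < n) (har : a + r = n) (v : K) (m : ℕ) :
    E ⟨i - 1, by omega⟩ ⟨n - 1, by omega⟩
        (ascProd (qminor t (idxSeq n a r (by omega)) (idxSeq n (a - 1) r (by omega))) v (m + 1) ζ) =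
      ((-1 : K) ^ (n - i) * (m + 1) *
          ∏ j ∈ Finset.univ.filter (fun j : Fin n => i ≤ (j : ℕ)), c j (v + m + a - (j : ℕ))) •
        qminor t (idxSeq n a q (by omega)) (idxSeq n (a - 1) q (by omega)) (v + m)
          (ascProd (qminor t (idxSeq n a r (by omega)) (idxSeq n (a - 1) r (by omega))) v m ζ) := by
  obtain ⟨p, rfl⟩ : ∃ p, r = q + (p + 1) := ⟨r - q - 1, by omega⟩
  obtain rfl : n = i + (p + 1) := by omega
  subst haq
  have hstring := h.linear_coeff_natAdd_ascProd_apply ht hE hq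
    (idxSeq_strictMono a (q + (p + 1)) (by omega))
    (idxSeq_strictMono (a - 1) (q + (p + 1)) (by omega)).injective
    (init_idxSeq_eq_tail_idxSeq (r := q + p) ha (by omega) (by omega)) v m
  have hcol : idxSeq (a + q + (p + 1)) (a - 1) (q + (p + 1)) (by omega) (Fin.natAdd q 0) =
      ⟨a + q - 1, by omega⟩ := by
    simp only [idxSeq, Fin.ext_iff, Fin.val_natAdd, Fin.val_zero]
    omega
  have hrow : idxSeq (a + q + (p + 1)) a (q + (p + 1)) (by omega) (Fin.last (q + p)) =
      ⟨a + q + (p + 1) - 1, by omega⟩ := by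
    simp only [idxSeq, Fin.ext_iff, Fin.val_last]
    omega
  have hfactor (s : Fin (p + 1)) :
      c (idxSeq (a + q + (p + 1)) a (q + (p + 1)) (by omega) (Fin.natAdd q s))
          (v + m - (q + (s : ℕ) : ℕ)) =
        c (Fin.natAdd (a + q) s) (v + m + a - (Fin.natAdd (a + q) s : ℕ)) := by
    congr 1
    · simp [idxSeq, Fin.ext_iff, add_assoc]
    · simp only [Fin.val_natAdd]
      push_cast
      ring
  rw [hcol, hrow] at hstring
  simp only [hfactor] at hstring
  rw [prod_filter_natAdd_le, Nat.add_sub_cancel_left]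
  exact hstring

theorem linear_coeff_ascProd_idxSeq_apply_self (h : IsHighestVector t c ζ) (ht : IsRTT t)
    (hE : IsMonicQuadratic t E F) {a r : ℕ} (ha : 1 ≤ a) (hr : 0 < r) (har : a + r = n)
    (v : K) (m : ℕ) :
    E ⟨a - 1, by omega⟩ ⟨n - 1, by omega⟩
        (ascProd (qminor t (idxSeq n a r (by omega)) (idxSeq n (a - 1) r (by omega))) v (m + 1) ζ) =
      ((-1 : K) ^ (r - 1) * (m + 1)) •
        (ascProd (qminor t (idxSeq n a r (by omega)) (idxSeq n (a - 1) r (by omega))) (v + 1) m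
            (qminor t (idxSeq n (a - 1) r (by omega)) (idxSeq n (a - 1) r (by omega)) v ζ) -
          ascProd (qminor t (idxSeq n a r (by omega)) (idxSeq n (a - 1) r (by omega))) v m
            (qminor t (idxSeq n a r (by omega)) (idxSeq n a r (by omega)) (v + m) ζ)) := by
  obtain ⟨r, rfl⟩ : ∃ r', r = r' + 1 := ⟨r - 1, by omega⟩
  subst har
  have hlt : idxSeq (a + (r + 1)) (a - 1) (r + 1) (by omega) 0 <
      idxSeq (a + (r + 1)) a (r + 1) le_rfl (Fin.last r) := by
    simp only [idxSeq, Fin.mk_lt_mk, Fin.val_zero, Fin.val_last]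
    omega
  exact h.linear_coeff_zero_ascProd_apply ht hE
    (idxSeq_strictMono a _ (by omega)).injective
    (idxSeq_strictMono (a - 1) _ (by omega)).injective
    (init_idxSeq_eq_tail_idxSeq ha le_rfl (by omega)) hlt v m

end IsHighestVector

end ConsecutiveIndices

section YangianRepresentation

variable {n : ℕ} {V : Type*} [AddCommGroup V] [Module ℂ V]
  {T : ℕ → Fin n → Fin n → (V →ₗ[ℂ] V)}

theorem isMonicQuadratic_Tpoly (T : ℕ → Fin n → Fin n → (V →ₗ[ℂ] V)) :
    IsMonicQuadratic (A := Module.End ℂ V) (Tpoly T) (T 1) (T 2) :=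
  ⟨fun _ _ _ => rfl⟩

theorem TTPoly_eq_ascProd (r a : ℕ) (ha : 1 ≤ a) (har : a < r) (hr : r ≤ n) (v : ℂ) (k : ℕ) :
    TTPoly T r a ha har hr v k = ascProd (A := Module.End ℂ V) (tauPoly T r a ha har hr) v k := by
  induction k with
  | zero => rfl
  | succ k ih => rw [TTPoly, ih]; rfl

theorem rtt_Tpoly (hT : IsYangianRep n T) (hvan : ∀ r, 3 ≤ r → ∀ i j, T r i j = 0)
    (i j k l : Fin n) (u v : ℂ) :
    (u - v) • (Tpoly T i j u ∘ₗ Tpoly T k l v - Tpoly T k l v ∘ₗ Tpoly T i j u) =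
      Tpoly T k j u ∘ₗ Tpoly T i l v - Tpoly T k j v ∘ₗ Tpoly T i l u := by
  obtain ⟨hT0, hrel⟩ := hT
  have hT3 : ∀ i j, T 3 i j = 0 := hvan 3 le_rfl
  have hcomm_left (s : ℕ) : T 0 i j ∘ₗ T s k l = T s k l ∘ₗ T 0 i j := by
    rw [hT0]
    split_ifs <;> simp
  have hcomm_right (s : ℕ) : T s i j ∘ₗ T 0 k l = T 0 k l ∘ₗ T s i j := by
    rw [hT0]
    split_ifs <;> simp
  have hTpoly (i j : Fin n) (u : ℂ) : Tpoly T i j u = u ^ 2 • T 0 i j + u • T 1 i j + T 2 i j := by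
    rw [Tpoly, hT0]
  -- Sum the relations indexed by `r, s ≤ 2` with weights `u ^ (2 - r) * v ^ (2 - s)`.
  linear_combination (norm := skip)
    (u ^ 2 * v ^ 2) • hrel 0 0 i j k l + (u ^ 2 * v) • hrel 0 1 i j k l +
      u ^ 2 • hrel 0 2 i j k l + (u * v ^ 2) • hrel 1 0 i j k l + (u * v) • hrel 1 1 i j k l +
      u • hrel 1 2 i j k l + v ^ 2 • hrel 2 0 i j k l + v • hrel 2 1 i j k l + hrel 2 2 i j k l
  simp only [hTpoly, Nat.reduceAdd, hT3, LinearMap.zero_comp, LinearMap.comp_zero,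
    LinearMap.comp_add, LinearMap.add_comp, LinearMap.smul_comp, LinearMap.comp_smul, hcomm_left,
    hcomm_right]
  module

theorem isRTT_Tpoly (hT : IsYangianRep n T) (hvan : ∀ r, 3 ≤ r → ∀ i j, T r i j = 0) :
    IsRTT (A := Module.End ℂ V) (Tpoly T) where
  rtt := rtt_Tpoly hT hvan
  polynomial i j φ := by
    refine ⟨.C (φ (if i = j then LinearMap.id else 0)) * .X ^ 2 + .C (φ (T 1 i j)) * .X +
      .C (φ (T 2 i j)), fun u => ?_⟩
    simp only [Tpoly, map_add, map_smul, smul_eq_mul, Polynomial.eval_add, Polynomial.eval_mul,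
      Polynomial.eval_pow, Polynomial.eval_C, Polynomial.eval_X, mul_comm]

end YangianRepresentation

end Yangian

/-- Let `ζ` satisfy `T_{ij}(u)ζ = 0` for `i < j` and
`T_{ii}(u)ζ = (u+λ_i)(u+μ_i)ζ`; set `l_j = λ_j − j + 1`, `m_j = μ_j − j + 1`
and `E_{in} := T^{(1)}_{in}`.  Then, for every `k ≥ 1`, `v ∈ ℂ` and
`1 ≤ a ≤ n−1` (indices `a`, `i` as in the paper, i.e. running over `1, …, n`):
(i) `E_{in} 𝒯_{na}(v,k)ζ = 0` for `i < a`;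
(ii) for `a < i ≤ n−1`,
`E_{in} 𝒯_{na}(v,k)ζ = (−1)^{n−i} k Π_{j=i+1}^n (v'+l_j)(v'+m_j) ·
τ_{ia}(v+k−1) 𝒯_{na}(v,k−1)ζ` with `v' = v+a+k−1`;
(iii) `E_{an} 𝒯_{na}(v,k)ζ = (−1)^{n−a−1} k (𝒯_{na}(v+1,k−1) T^{a⋯n−1}_{a⋯n−1}(v)
  − 𝒯_{na}(v,k−1) T^{a+1⋯n}_{a+1⋯n}(v+k−1)) ζ`. -/
theorem lowering_operator_action_on_highest
    (n : ℕ) {V : Type*} [AddCommGroup V] [Module ℂ V]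
    (T : ℕ → Fin n → Fin n → (V →ₗ[ℂ] V)) (hT : IsYangianRep n T)
    (hvan : ∀ r : ℕ, 3 ≤ r → ∀ i j : Fin n, T r i j = 0)
    (lam mu : Fin n → ℂ) (ζ : V)
    (hupper : ∀ u : ℂ, ∀ i j : Fin n, i < j → Tpoly T i j u ζ = 0)
    (hdiag : ∀ u : ℂ, ∀ i : Fin n, Tpoly T i i u ζ = ((u + lam i) * (u + mu i)) • ζ)
    (k : ℕ) (hk : 1 ≤ k) (v : ℂ) (a : ℕ) (ha1 : 1 ≤ a) (ha2 : a ≤ n - 1) :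
    (∀ i : ℕ, ∀ hi1 : 1 ≤ i, ∀ hia : i < a,
      T 1 ⟨i - 1, by omega⟩ ⟨n - 1, by omega⟩
        (TTPoly T n a ha1 (by omega) (by omega) v k ζ) = 0) ∧
    (∀ i : ℕ, ∀ hia : a < i, ∀ hin : i ≤ n - 1,
      T 1 ⟨i - 1, by omega⟩ ⟨n - 1, by omega⟩
          (TTPoly T n a ha1 (by omega) (by omega) v k ζ)
        = ((-1 : ℂ) ^ (n - i) * (k : ℂ) *
              ∏ j ∈ Finset.filter (fun j : Fin n => i ≤ (j : ℕ)) Finset.univ,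
                ((v + (a : ℂ) + (k : ℂ) - 1 + (lam j - ((j : ℕ) : ℂ))) *
                  (v + (a : ℂ) + (k : ℂ) - 1 + (mu j - ((j : ℕ) : ℂ)))))
            • tauPoly T i a ha1 hia (by omega) (v + (k : ℂ) - 1)
                (TTPoly T n a ha1 (by omega) (by omega) v (k - 1) ζ)) ∧
    (T 1 ⟨a - 1, by omega⟩ ⟨n - 1, by omega⟩
        (TTPoly T n a ha1 (by omega) (by omega) v k ζ)
      = ((-1 : ℂ) ^ (n - a - 1) * (k : ℂ)) •
          (TTPoly T n a ha1 (by omega) (by omega) (v + 1) (k - 1)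
              (TqminorPoly T (n - a) (idxSeq n (a - 1) (n - a) (by omega))
                (idxSeq n (a - 1) (n - a) (by omega)) v ζ)
            - TTPoly T n a ha1 (by omega) (by omega) v (k - 1)
              (TqminorPoly T (n - a) (idxSeq n a (n - a) (by omega))
                (idxSeq n a (n - a) (by omega)) (v + (k : ℂ) - 1) ζ))) := by
  obtain ⟨m, rfl⟩ : ∃ m, k = m + 1 := ⟨k - 1, by omega⟩
  have hζ : Yangian.IsHighestVector (Tpoly T) (fun i u => (u + lam i) * (u + mu i)) ζ :=
    ⟨fun i j u => hupper u i j, fun i u => hdiag u i⟩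
  have hRTT := Yangian.isRTT_Tpoly hT hvan
  have hE := Yangian.isMonicQuadratic_Tpoly T
  have hv : v + ((m : ℂ) + 1) - 1 = v + m := by ring
  simp only [Yangian.TTPoly_eq_ascProd, Nat.cast_succ, hv, Nat.add_sub_cancel]
  refine ⟨fun i hi hia => ?_, fun i hai hin => ?_, ?_⟩
  · exact hζ.linear_coeff_ascProd_idxSeq_apply_of_lt hRTT hE hi hia (by omega) v m
  · have hfactor (j : Fin n) (x : ℂ) :
        v + a + (m + 1) - 1 + (x - (j : ℕ)) = v + m + a - (j : ℕ) + x := by ring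
    simp only [hfactor]
    exact hζ.linear_coeff_ascProd_idxSeq_apply_of_gt hRTT hE ha1 (Nat.sub_pos_of_lt hai)
      (Nat.add_sub_cancel' hai.le) (by omega) (by omega) v m
  · exact hζ.linear_coeff_ascProd_idxSeq_apply_self hRTT hE ha1 (Nat.sub_pos_of_lt (by omega))
      (Nat.add_sub_cancel' (by omega)) v m
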